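/- Let k ≥ 1 and let φ = ∃X.∀Y.ψ be a quantified Boolean formula where X = {x₁,…,xₙ} and Y = {y₁,…,y_m} are disjoint sets of variables and ψ = δ₁ ∨ … ∨ δ_u is a 3DNF formula in which every variable of Y occurs only positively, with δ_ℓ = l^ℓ₁ ∧ l^ℓ₂ ∧ l^ℓ₃ for each 1 ≤ ℓ ≤ u. Let σ map literals to atoms by σ(x_i) = x_i, σ(¬x_i) = v_i, σ(y_i) = y_i, and let P be the disjunctive logic program over the atoms X ∪ Y ∪ {v₁,…,vₙ} ∪ {w} ∪ {y^j_i : 1 ≤ j ≤ k, 1 ≤ i ≤ m} consisting of the rules: (x_i ← not v_i) and (v_i ← not x_i) for 1 ≤ i ≤ n; (y^j_1 ∨ … ∨ y^j_m ←) for 1 ≤ j ≤ k; (y_i ← y^j_i) and (y^j_i ← w) for 1 ≤ i ≤ m and 1 ≤ j ≤ k; (w ← y^j_i, y^{j′}_i) for 1 ≤ i ≤ m and 1 ≤ j < j′ ≤ k; (w ← σ(l^ℓ₁), σ(l^ℓ₂), σ(l^ℓ₃)) for 1 ≤ ℓ ≤ u; and (w ← not w). Then the disjunctive rules of P are exactly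 the k rules (y^j_1 ∨ … ∨ y^j_m ←), and the following are equivalent: (1) there exists a truth assignment α : X → Bool such that for every truth assignment β : Y → Bool of weight k the assignment α ∪ β satisfies ψ; (2) P has an answer set. -/

import Mathlib

/-- A rule of a disjunctive logic program: `head` is the (disjunctive) head,
`pos` the positive body atoms and `neg` the (default-negated) negative body atoms. -/
structure Rule (A : Type) where
  head : Finset A
  pos : Finset A
  neg : Finset A

namespace Rule
variable {A : Type}

/-- A rule is normal if its head contains at most one atom. -/
def isNormal (r : Rule A) : Prop := r.head.card ≤ 1

/-- A rule is disjunctive if its head contains more than one atom. -/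
def isDisjunctive (r : Rule A) : Prop := 1 < r.head.card

/-- A rule is negation-free if its negative body is empty. -/
def negFree (r : Rule A) : Prop := r.neg = ∅

/-- A set `M` of atoms satisfies a (negation-free) rule if, whenever all atoms of the
positive body belong to `M`, some head atom belongs to `M`. -/
def satisfiedBy (r : Rule A) (M : Set A) : Prop :=
  (∀ b ∈ r.pos, b ∈ M) → ∃ a ∈ r.head, a ∈ M

end Rule

/-- The set of atoms occurring in a program. -/
def progAtoms {A : Type} (P : Set (Rule A)) : Set A :=
  {a | ∃ r ∈ P, a ∈ r.head ∨ a ∈ r.pos ∨ a ∈ r.neg}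

/-- `M` is a model of the (negation-free) program `P`. -/
def isModel {A : Type} (P : Set (Rule A)) (M : Set A) : Prop :=
  ∀ r ∈ P, r.satisfiedBy M

/-- `M` is a minimal model of the (negation-free) program `P`. -/
def isMinimalModel {A : Type} (P : Set (Rule A)) (M : Set A) : Prop :=
  isModel P M ∧ ∀ M' : Set A, M' ⊂ M → ¬ isModel P M'

/-- The GL reduct of `P` with respect to `M`: remove every rule whose negative body
meets `M`, and delete the negative bodies of the remaining rules. -/
def reduct {A : Type} (P : Set (Rule A)) (M : Set A) : Set (Rule A) :=
  {r' | ∃ r ∈ P, (∀ c ∈ r.neg, c ∉ M) ∧ r' = ⟨r.head, r.pos, ∅⟩}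

/-- An answer set of `P` is a set `M ⊆ Atoms(P)` that is a subset-minimal model
of the reduct `P^M`. -/
def isAnswerSet {A : Type} (P : Set (Rule A)) (M : Set A) : Prop :=
  M ⊆ progAtoms P ∧ isMinimalModel (reduct P M) M

/-- The compulsory atoms `Comp(P)`: the smallest set of atoms such that (i) if
`(w ← not w)` is a rule of `P` then `w` is compulsory, and (ii) if `(b ← a₁,…,aₙ)`
is a normal negation-free rule of `P` all of whose body atoms are compulsory,
then `b` is compulsory. -/
inductive Compulsory {A : Type} (P : Set (Rule A)) : A → Prop
  | loop (w : A) : (⟨{w}, ∅, {w}⟩ : Rule A) ∈ P → Compulsory P w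
  | rule (r : Rule A) (b : A) : r ∈ P → r.head = {b} → r.neg = ∅ →
      (∀ a ∈ r.pos, Compulsory P a) → Compulsory P b

/-- The contingent atoms `Cont(P) = Atoms(P) ∖ Comp(P)`. -/
def ContingentAtoms {A : Type} (P : Set (Rule A)) : Set A :=
  progAtoms P \ {a | Compulsory P a}

/-- A rule of `P` is contingent if its head contains a contingent atom. -/
def isContingentRule {A : Type} (P : Set (Rule A)) (r : Rule A) : Prop :=
  r ∈ P ∧ ∃ a ∈ r.head, a ∈ ContingentAtoms P

/-- The weight of a truth assignment: the number of variables it maps to true. -/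
def weight {X : Type} [Fintype X] (α : X → Bool) : ℕ :=
  (Finset.univ.filter fun x => α x = true).card

/-- The atoms of the constructed program: the variables `x₁,…,xₙ` and `y₁,…,y_m` of the
quantified Boolean formula, the fresh atoms `v₁,…,vₙ`, `w`, and `y^j_i` for
`1 ≤ j ≤ k`, `1 ≤ i ≤ m`. -/
inductive Atom2 (n m k : ℕ) : Type
  | x (i : Fin n)
  | y (i : Fin m)
  | v (i : Fin n)
  | w
  | yj (j : Fin k) (i : Fin m)
deriving DecidableEq

/-- The mapping `σ` from literals over `X ∪ Y` to atoms:
`σ(x_i) = x_i`, `σ(¬x_i) = v_i`, `σ(y_i) = y_i` (variables of `Y` occur only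
positively in `ψ`). -/
def sigma2 {n m : ℕ} (k : ℕ) (l : (Fin n ⊕ Fin m) × Bool) : Atom2 n m k :=
  match l with
  | (Sum.inl i, true) => Atom2.x i
  | (Sum.inl i, false) => Atom2.v i
  | (Sum.inr i, _) => Atom2.y i

/-- The disjunctive "guessing" rule `(y^j_1 ∨ … ∨ y^j_m ←)`. -/
def guessRule2 (n m : ℕ) {k : ℕ} (j : Fin k) : Rule (Atom2 n m k) :=
  ⟨Finset.univ.image (Atom2.yj j), ∅, ∅⟩

/-- The disjunctive logic program `P` constructed from the 3DNF formula
`ψ = δ₁ ∨ … ∨ δ_u` (given by the literal table `δ`). -/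
def prog2 (k : ℕ) {n m u : ℕ} (δ : Fin u → Fin 3 → (Fin n ⊕ Fin m) × Bool) :
    Set (Rule (Atom2 n m k)) :=
  {r |
    (∃ i : Fin n, r = ⟨{Atom2.x i}, ∅, {Atom2.v i}⟩)
    ∨ (∃ i : Fin n, r = ⟨{Atom2.v i}, ∅, {Atom2.x i}⟩)
    ∨ (∃ j : Fin k, r = guessRule2 n m j)
    ∨ (∃ (i : Fin m) (j : Fin k), r = ⟨{Atom2.y i}, {Atom2.yj j i}, ∅⟩)
    ∨ (∃ (i : Fin m) (j : Fin k), r = ⟨{Atom2.yj j i}, {Atom2.w}, ∅⟩)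
    ∨ (∃ (i : Fin m) (j j' : Fin k), j < j' ∧
        r = ⟨{Atom2.w}, {Atom2.yj j i, Atom2.yj j' i}, ∅⟩)
    ∨ (∃ l : Fin u,
        r = ⟨{Atom2.w}, {sigma2 k (δ l 0), sigma2 k (δ l 1), sigma2 k (δ l 2)}, ∅⟩)
    ∨ r = ⟨{Atom2.w}, ∅, {Atom2.w}⟩}

/-- Unfolding of being a model of the reduct of `prog2`. -/
theorem isModel_reduct_prog2 {n m k u : ℕ} (δ : Fin u → Fin 3 → (Fin n ⊕ Fin m) × Bool)
    (M N : Set (Atom2 n m k)) :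
    isModel (reduct (prog2 k δ) M) N ↔
      (∀ i, Atom2.v i ∉ M → Atom2.x i ∈ N) ∧
      (∀ i, Atom2.x i ∉ M → Atom2.v i ∈ N) ∧
      (∀ j, ∃ i, Atom2.yj j i ∈ N) ∧
      (∀ i j, Atom2.yj j i ∈ N → Atom2.y i ∈ N) ∧
      (∀ i j, Atom2.w ∈ N → Atom2.yj j i ∈ N) ∧
      (∀ i j j', j < j' → Atom2.yj j i ∈ N → Atom2.yj j' i ∈ N → Atom2.w ∈ N) ∧
      (∀ l, (∀ d, sigma2 k (δ l d) ∈ N) → Atom2.w ∈ N) ∧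
      (Atom2.w ∉ M → Atom2.w ∈ N) := by
  constructor
  · intro h
    have key : ∀ r ∈ prog2 k δ, (∀ c ∈ r.neg, c ∉ M) → (∀ b ∈ r.pos, b ∈ N) →
        ∃ a ∈ r.head, a ∈ N := fun r hr hc =>
        h ⟨r.head, r.pos, ∅⟩ ⟨r, hr, hc, rfl⟩
    refine ⟨fun i hi => ?_, fun i hi => ?_, fun j => ?_, fun i j hi => ?_, fun i j hi => ?_,
      fun i j j' hj h1 h2 => ?_, fun l hl => ?_, fun hw => ?_⟩
    · simpa using key _ (Or.inl ⟨i, rfl⟩) (by simpa using hi) (by simp)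
    · simpa using key _ (Or.inr (Or.inl ⟨i, rfl⟩)) (by simpa using hi) (by simp)
    · simpa [guessRule2] using key _ (Or.inr (Or.inr (Or.inl ⟨j, rfl⟩)))
        (by simp [guessRule2]) (by simp [guessRule2])
    · simpa using key _ (Or.inr (Or.inr (Or.inr (Or.inl ⟨i, j, rfl⟩))))
        (by simp) (by simpa using hi)
    · simpa using key _ (Or.inr (Or.inr (Or.inr (Or.inr (Or.inl ⟨i, j, rfl⟩)))))
        (by simp) (by simpa using hi)
    · simpa using key _ (Or.inr (Or.inr (Or.inr (Or.inr (Or.inr (Or.inl ⟨i, j, j', hj, rfl⟩))))))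
        (by simp) (by simpa using ⟨h1, h2⟩)
    · simpa using key _ (Or.inr (Or.inr (Or.inr (Or.inr (Or.inr (Or.inr (Or.inl ⟨l, rfl⟩)))))))
        (by simp) (by simpa using ⟨hl 0, hl 1, hl 2⟩)
    · simpa using key _ (Or.inr (Or.inr (Or.inr (Or.inr (Or.inr (Or.inr (Or.inr rfl)))))))
        (by simpa using hw) (by simp)
  · rintro ⟨h1, h2, h3, h4, h5, h6, h7, h8⟩ r' ⟨r, hr, hc, rfl⟩
    rcases hr with ⟨i, rfl⟩ | ⟨i, rfl⟩ | ⟨j, rfl⟩ | ⟨i, j, rfl⟩ | ⟨i, j, rfl⟩ |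
      ⟨i, j, j', hj, rfl⟩ | ⟨l, rfl⟩ | rfl <;> intro hb
    · simpa using h1 i (by simpa using hc)
    · simpa using h2 i (by simpa using hc)
    · simpa [guessRule2] using h3 j
    · simpa using h4 i j (by simpa using hb)
    · simpa using h5 i j (by simpa using hb)
    · simp at hb
      simpa using h6 i j j' hj hb.1 hb.2
    · simp at hb
      simpa using h7 l (fun d => by fin_cases d; exacts [hb.1, hb.2.1, hb.2.2])
    · simpa using h8 (by simpa using hc)

/-- Correctness of the reduction from ∃*∀ᵏ-WSat(3DNF) (for formulas whose universal
variables occur only positively) to ASP-consistency parameterized by the number of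
disjunctive rules: the disjunctive rules of the constructed program `P` are exactly the
`k` guessing rules `(y^j_1 ∨ … ∨ y^j_m ←)`, and there is an assignment `α` to `X` such
that every weight-`k` assignment `β` to `Y` makes `α ∪ β` satisfy `ψ` iff `P` has an
answer set. -/
theorem statement2 {n m k u : ℕ} (hk : 1 ≤ k) (hm : 2 ≤ m)
    (δ : Fin u → Fin 3 → (Fin n ⊕ Fin m) × Bool)
    (hpos : ∀ (l : Fin u) (d : Fin 3) (i : Fin m),
      (δ l d).1 = Sum.inr i → (δ l d).2 = true) :
    ({r : Rule (Atom2 n m k) | r ∈ prog2 k δ ∧ r.isDisjunctive}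
        = Set.range (guessRule2 n m (k := k))) ∧
    Function.Injective (guessRule2 n m (k := k)) ∧
    ((∃ α : Fin n → Bool,
        ∀ β : Fin m → Bool, weight β = k →
          ∃ l : Fin u, ∀ d : Fin 3, Sum.elim α β (δ l d).1 = (δ l d).2) ↔
      ∃ M : Set (Atom2 n m k), isAnswerSet (prog2 k δ) M) := by
  refine ⟨?_, ?_, ?_, ?_⟩
  · ext r
    constructor
    · rintro ⟨hr, hd⟩
      rcases hr with ⟨i, rfl⟩ | ⟨i, rfl⟩ | ⟨j, rfl⟩ | ⟨i, j, rfl⟩ | ⟨i, j, rfl⟩ |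
        ⟨i, j, j', hj, rfl⟩ | ⟨l, rfl⟩ | rfl
      · simp [Rule.isDisjunctive] at hd
      · simp [Rule.isDisjunctive] at hd
      · exact ⟨j, rfl⟩
      all_goals simp [Rule.isDisjunctive] at hd
    · rintro ⟨j, rfl⟩
      refine ⟨Or.inr (Or.inr (Or.inl ⟨j, rfl⟩)), ?_⟩
      have hinj : Function.Injective (Atom2.yj (n := n) (m := m) j) := by
        intro a b h
        injection h
      simp only [Rule.isDisjunctive, guessRule2]
      rw [Finset.card_image_of_injective _ hinj]
      simp
      omega
  · intro a b h
    have h' := congrArg Rule.head h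
    simp only [guessRule2] at h'
    have : Atom2.yj a ⟨0, by omega⟩ ∈ Finset.univ.image (Atom2.yj (n := n) (m := m) b) := by
      rw [← h']
      exact Finset.mem_image_of_mem _ (Finset.mem_univ _)
    simp at this
    exact this.symm
  · rintro ⟨α, hα⟩
    let M : Set (Atom2 n m k) := fun a => match a with
      | .x i => α i = true
      | .v i => α i = false
      | _ => True
    have hx : ∀ i, Atom2.x i ∈ M ↔ α i = true := fun i => Iff.rfl
    have hv : ∀ i, Atom2.v i ∈ M ↔ α i = false := fun i => Iff.rfl
    have hy : ∀ i, Atom2.y i ∈ M := fun i => trivial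
    have hw : Atom2.w ∈ M := trivial
    have hyj : ∀ j i, Atom2.yj j i ∈ M := fun j i => trivial
    refine ⟨M, ?_, ?_, ?_⟩
    · intro a _
      cases a with
      | x i => exact ⟨_, Or.inl ⟨i, rfl⟩, by simp⟩
      | v i => exact ⟨_, Or.inl ⟨i, rfl⟩, by simp⟩
      | y i => exact ⟨_, Or.inr (Or.inr (Or.inr (Or.inl ⟨i, ⟨0, by omega⟩, rfl⟩))), by simp⟩
      | yj j i => exact ⟨_, Or.inr (Or.inr (Or.inr (Or.inl ⟨i, j, rfl⟩))), by simp⟩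
      | w => exact ⟨_, Or.inr (Or.inr (Or.inr (Or.inr (Or.inr (Or.inr (Or.inr rfl)))))), by simp⟩
    · rw [isModel_reduct_prog2]
      refine ⟨fun i hi => ?_, fun i hi => ?_, fun j => ⟨⟨0, by omega⟩, hyj _ _⟩, fun i _ _ => hy i,
        fun i j _ => hyj j i, fun _ _ _ _ _ _ => hw, fun _ _ => hw, fun _ => hw⟩
      · rw [hv] at hi
        rw [hx]
        simpa using hi
      · rw [hx] at hi
        rw [hv]
        simpa using hi
    · intro N hN hmod
      rw [isModel_reduct_prog2] at hmod
      obtain ⟨h1, h2, h3, h4, h5, h6, h7, -⟩ := hmod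
      have hNx : ∀ i, α i = true → Atom2.x i ∈ N := fun i hi => h1 i (by rw [hv]; simp [hi])
      have hNv : ∀ i, α i = false → Atom2.v i ∈ N := fun i hi => h2 i (by rw [hx]; simp [hi])
      have hwN : Atom2.w ∈ N := by
        choose f hf using h3
        by_contra hwN
        have hinj : Function.Injective f := by
          intro a b hab
          rcases lt_trichotomy a b with h | h | h
          · exact absurd (h6 _ _ _ h (hf a) (hab ▸ hf b)) hwN
          · exact h
          · exact absurd (h6 _ _ _ h (hf b) (hab ▸ hf a)) hwN
        obtain ⟨l, hl⟩ := hα (fun i => decide (i ∈ Finset.univ.image f)) (by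
          unfold weight
          have : (Finset.univ.filter fun i => decide (i ∈ Finset.univ.image f) = true)
              = Finset.univ.image f := by
            ext i
            simp
          rw [this, Finset.card_image_of_injective _ hinj]
          simp)
        refine hwN (h7 l fun d => ?_)
        have hd := hl d
        have hp := hpos l d
        generalize δ l d = e at hd hp
        obtain ⟨i | i, b⟩ := e
        · cases b
          · exact hNv i hd
          · exact hNx i hd
        · have hb : b = true := hp i rfl
          subst hb
          simp at hd
          obtain ⟨j, rfl⟩ := hd
          exact h4 _ j (hf j)
      apply hN.2
      intro a ha
      cases a with
      | x i => exact hNx i ha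
      | v i => exact hNv i ha
      | y i => exact h4 i ⟨0, by omega⟩ (h5 _ _ hwN)
      | yj j i => exact h5 _ _ hwN
      | w => exact hwN
  · rintro ⟨M, -, hM, hmin⟩
    rw [isModel_reduct_prog2] at hM
    obtain ⟨h1, h2, h3, h4, h5, h6, h7, h8⟩ := hM
    have hw : Atom2.w ∈ M := by
      by_contra h
      exact h (h8 h)
    classical
    refine ⟨fun i => decide (Atom2.x i ∈ M), fun β hβ => ?_⟩
    by_contra hno
    let e := (Finset.univ.filter fun i => β i = true).equivFinOfCardEq hβ
    let f : Fin k → Fin m := fun j => (e.symm j).1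
    have hf : ∀ j, β (f j) = true := fun j =>
      (Finset.mem_filter.mp (e.symm j).2).2
    have hinj : Function.Injective f := fun a b h => e.symm.injective (Subtype.ext h)
    let N : Set (Atom2 n m k) := fun a => match a with
      | .x i => Atom2.x i ∈ M
      | .v i => Atom2.x i ∉ M
      | .y i => β i = true
      | .yj j i => f j = i
      | .w => False
    have hx : ∀ i, Atom2.x i ∈ N ↔ Atom2.x i ∈ M := fun i => Iff.rfl
    have hv : ∀ i, Atom2.v i ∈ N ↔ Atom2.x i ∉ M := fun i => Iff.rfl
    have hy : ∀ i, Atom2.y i ∈ N ↔ β i = true := fun i => Iff.rfl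
    have hyj : ∀ j i, Atom2.yj j i ∈ N ↔ f j = i := fun j i => Iff.rfl
    have hwN : Atom2.w ∉ N := fun h => h
    refine hmin N ⟨?_, fun h => hwN (h hw)⟩ ?_
    · intro a ha
      cases a with
      | x i => exact ha
      | v i => exact h2 i ha
      | y i => exact h4 i ⟨0, by omega⟩ (h5 _ _ hw)
      | yj j i => exact h5 _ _ hw
      | w => exact hw
    · rw [isModel_reduct_prog2]
      refine ⟨h1, fun i hi => hi, fun j => ⟨f j, rfl⟩, ?_, fun i j h => (hwN h).elim, ?_, ?_,
        fun h => (h hw).elim⟩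
      · intro i j h
        rw [hyj] at h
        rw [hy, ← h]
        exact hf j
      · intro i j j' hj ha hb
        rw [hyj] at ha hb
        exact absurd (hinj (ha.trans hb.symm)) hj.ne
      · intro l hl
        refine (hno ⟨l, fun d => ?_⟩).elim
        have hd := hl d
        have hp := hpos l d
        generalize δ l d = e at hd hp
        obtain ⟨i | i, b⟩ := e
        · cases b
          · have : Atom2.x i ∉ M := hd
            simpa using this
          · have : Atom2.x i ∈ M := hd
            simpa using this
        · have hb : b = true := hp i rfl
          subst hb
          exact hd
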